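/- arXiv:2006.06927 — 6 statements merged into one kernel-verified Lean document; each statement's English description precedes it below -/
import Mathlib

section
/- Let p < 1 with p ≠ 0 and let p' = p/(p−1) be its conjugate exponent. If the generator g is strictly increasing, then for all a, b ∈ ℝ with g(a) > 0 and g(b) > 0 the reverse pseudo-Young inequality holds: (a^(p) ⊘ g⁻¹(p)) ⊕ (b^(p') ⊘ g⁻¹(p')) ≤_g a ⊗ b; equivalently, g(a)^p/p + g(b)^{p'}/p' ≤ g(a)·g(b). -/
noncomputable section

/-- pseudo-addition: `x ⊕ y = g⁻¹(g x + g y)` -/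
def padd (g ginv : ℝ → ℝ) (x y : ℝ) : ℝ := ginv (g x + g y)

/-- pseudo-multiplication: `x ⊗ y = g⁻¹(g x * g y)` -/
def pmul (g ginv : ℝ → ℝ) (x y : ℝ) : ℝ := ginv (g x * g y)

/-- pseudo-division: `x ⊘ y = g⁻¹(g x / g y)` -/
def pdiv (g ginv : ℝ → ℝ) (x y : ℝ) : ℝ := ginv (g x / g y)

/-- pseudo-power: `x^(p) = g⁻¹((g x)^p)` (real power) -/
def ppow (g ginv : ℝ → ℝ) (x p : ℝ) : ℝ := ginv (g x ^ p)

/-- pseudo-order for an increasing generator: `x ≤_g y ↔ g x ≤ g y` -/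
def pleInc (g : ℝ → ℝ) (x y : ℝ) : Prop := g x ≤ g y

theorem young_rev_aux (p p' x y : ℝ) (h0 : 0 < p) (h1 : p < 1) (hp' : p' = p / (p - 1))
    (hx : 0 < x) (hy : 0 < y) : x ^ p / p + y ^ p' / p' ≤ x * y := by
  have hne : p - 1 ≠ 0 := by linarith
  have key := Real.geom_mean_le_arith_mean2_weighted (w₁ := p) (w₂ := 1 - p)
    (p₁ := x * y) (p₂ := y ^ p') h0.le (by linarith) (by positivity) (by positivity) (by ring)
  have e : p' * (1 - p) = - p := by rw [hp']; field_simp; ring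
  rw [← Real.rpow_mul hy.le, e, Real.mul_rpow hx.le hy.le, mul_assoc, ← Real.rpow_add hy,
    add_neg_cancel, Real.rpow_zero, mul_one] at key
  have e2 : y ^ p' / p' = (p - 1) * y ^ p' / p := by
    generalize y ^ p' = z
    rw [hp']; field_simp
  rw [e2, ← add_div, div_le_iff₀ h0]
  linarith

/-- Reverse pseudo-Young inequality for an increasing generator, `p < 1`, `p ≠ 0`:
`(a^(p) ⊘ g⁻¹(p)) ⊕ (b^(p') ⊘ g⁻¹(p')) ≤_g a ⊗ b`. -/
theorem pseudo_young_rev_inc (g ginv : ℝ → ℝ)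
    (hmono : StrictMono g) (hcont : Continuous g)
    (hli : Function.LeftInverse ginv g) (hri : Function.RightInverse ginv g)
    (p p' : ℝ) (hp : p < 1) (hp0 : p ≠ 0) (hp' : p' = p / (p - 1))
    (a b : ℝ) (ha : 0 < g a) (hb : 0 < g b) :
    pleInc g
      (padd g ginv (pdiv g ginv (ppow g ginv a p) (ginv p))
        (pdiv g ginv (ppow g ginv b p') (ginv p')))
      (pmul g ginv a b) := by
  have hg : ∀ z, g (ginv z) = z := hri
  simp only [pleInc, padd, pdiv, ppow, pmul, hg]
  rcases lt_or_gt_of_ne hp0 with h | h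
  · have hne : p - 1 ≠ 0 := by linarith
    have h0 : 0 < p' := by rw [hp']; exact div_pos_of_neg_of_neg h (by linarith)
    have e : p' - 1 = 1 / (p - 1) := by rw [hp']; field_simp; ring
    have h1 : p' < 1 := by
      have : 1 / (p - 1) < 0 := div_neg_of_pos_of_neg one_pos (by linarith)
      linarith
    have e3 : p = p' / (p' - 1) := by rw [e, hp']; field_simp
    have := young_rev_aux p' p (g b) (g a) h0 h1 e3 hb ha
    linarith
  · exact young_rev_aux p p' (g a) (g b) h hp hp' ha hb
end
end

section
/- Let 1 < p, q, r < ∞ with 1/p + 1/q = 1/r. Let f, h : ℝ → ℝ with g∘f and g∘h measurable, and suppose ∫_ℝ |g(f(x))|^p·g'(x) dx < ∞ and ∫_ℝ |g(h(x))|^q·g'(x) dx < ∞. Then ∫_ℝ |g(f(x))·g(h(x))|^r·g'(x) dx < ∞ and the generalized pseudo-Hölder inequality holds: [f ⊗ h]_r ≤_g [f]_p ⊗ [h]_q; equivalently, (∫_ℝ |g(f(x))·g(h(x))|^r·g'(x) dx)^{1/r} ≤ (∫_ℝ |g(f(x))|^p·g'(x) dx)^{1/p}·(∫_ℝ |g(h(x))|^q·g'(x)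 dx)^{1/q}. -/
open MeasureTheory

noncomputable section

/-- pseudo `r`-functional: `[f]_r = g⁻¹((∫ |g (f x)|^r g'(x) dx)^(1/r))` -/
def pfunc (g ginv g' : ℝ → ℝ) (f : ℝ → ℝ) (r : ℝ) : ℝ :=
  ginv ((∫ x, |g (f x)| ^ r * g' x) ^ (1 / r))

/-- Generalized pseudo-Hölder inequality for an increasing generator,
`1 < p, q, r < ∞`, `1/p + 1/q = 1/r`: `[f ⊗ h]_r ≤_g [f]_p ⊗ [h]_q`. -/
theorem pseudo_holder_general (g ginv g' : ℝ → ℝ)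
    (hmono : StrictMono g) (hderiv : ∀ x, HasDerivAt g (g' x) x)
    (hli : Function.LeftInverse ginv g) (hri : Function.RightInverse ginv g)
    (p q r : ℝ) (hp : 1 < p) (hq : 1 < q) (hr : 1 < r)
    (hpqr : 1 / p + 1 / q = 1 / r)
    (f h : ℝ → ℝ) (hf : Measurable (g ∘ f)) (hh : Measurable (g ∘ h))
    (hfi : Integrable (fun x => |g (f x)| ^ p * g' x))
    (hhi : Integrable (fun x => |g (h x)| ^ q * g' x)) :
    Integrable (fun x => |g (f x) * g (h x)| ^ r * g' x) ∧
      pleInc g (pfunc g ginv g' (fun x => pmul g ginv (f x) (h x)) r)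
        (pmul g ginv (pfunc g ginv g' f p) (pfunc g ginv g' h q)) := by
  have hr0 : 0 < r := by linarith
  have hp0 : 0 < p := by linarith
  have hq0 : 0 < q := by linarith
  have hg'0 : ∀ x, 0 ≤ g' x := fun x => by
    rw [← (hderiv x).deriv]; exact hmono.monotone.deriv_nonneg
  have hg'm : Measurable g' := by
    have : g' = deriv g := funext fun x => ((hderiv x).deriv).symm
    rw [this]; exact measurable_deriv g
  have hfm : Measurable fun x => g (f x) := hf
  have hhm : Measurable fun x => g (h x) := hh
  have hsum : r / p + r / q = 1 := by
    have := congrArg (fun t => r * t) hpqr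
    simp only [mul_add] at this
    rw [mul_one_div, mul_one_div, mul_one_div, div_self hr0.ne'] at this
    exact this
  have hpq : (p / r).HolderConjugate (q / r) := by
    rw [Real.holderConjugate_iff]
    refine ⟨?_, ?_⟩
    · rw [one_lt_div hr0]
      have : 0 < r / q := by positivity
      have h1 : r / p < 1 := by linarith
      rwa [div_lt_one hp0] at h1
    · rw [inv_div, inv_div]; exact hsum
  have key : ∀ (u : ℝ → ℝ) (s : ℝ), 0 < s → (∀ x, 0 ≤ u x) → ∀ x,
      (u x ^ r * g' x ^ (r / s)) ^ (s / r) = u x ^ s * g' x := by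
    intro u s hs hu x
    rw [Real.mul_rpow (Real.rpow_nonneg (hu x) _) (Real.rpow_nonneg (hg'0 x) _),
      ← Real.rpow_mul (hu x), ← Real.rpow_mul (hg'0 x)]
    have h1 : r * (s / r) = s := by field_simp
    have h2 : r / s * (s / r) = 1 := by field_simp
    rw [h1, h2, Real.rpow_one]
  have keyF := key (fun x => |g (f x)|) p hp0 (fun x => abs_nonneg _)
  have keyH := key (fun x => |g (h x)|) q hq0 (fun x => abs_nonneg _)
  have nn : ∀ (u : ℝ → ℝ) (s : ℝ) (x : ℝ), 0 ≤ |g (u x)| ^ r * g' x ^ (r / s) := fun u s x =>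
    mul_nonneg (Real.rpow_nonneg (abs_nonneg _) _) (Real.rpow_nonneg (hg'0 x) _)
  have mem : ∀ (u : ℝ → ℝ) (s : ℝ), 0 < s → Measurable (fun x => g (u x)) →
      Integrable (fun x => |g (u x)| ^ s * g' x) →
      MemLp (fun x => |g (u x)| ^ r * g' x ^ (r / s)) (ENNReal.ofReal (s / r)) := by
    intro u s hs hu hi
    have hsr : 0 < s / r := by positivity
    have hm : Measurable (fun x => |g (u x)| ^ r * g' x ^ (r / s)) :=
      (Measurable.pow_const (f := fun x => |g (u x)|) hu.norm r).mul (hg'm.pow_const _)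
    rw [← integrable_norm_rpow_iff hm.aestronglyMeasurable
      (by simpa using hsr) ENNReal.ofReal_ne_top, ENNReal.toReal_ofReal hsr.le]
    refine hi.congr (Filter.Eventually.of_forall fun x => ?_)
    simp only [Real.norm_of_nonneg (nn u s x)]
    exact (key (fun x => |g (u x)|) s hs (fun x => abs_nonneg _) x).symm
  have mF := mem f p hp0 hfm hfi
  have mH := mem h q hq0 hhm hhi
  have prod : ∀ x, (|g (f x)| ^ r * g' x ^ (r / p)) * (|g (h x)| ^ r * g' x ^ (r / q))
      = |g (f x) * g (h x)| ^ r * g' x := by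
    intro x
    have h1 : g' x ^ (r / p) * g' x ^ (r / q) = g' x := by
      rw [← Real.rpow_add_of_nonneg (hg'0 x) (by positivity) (by positivity), hsum, Real.rpow_one]
    rw [mul_mul_mul_comm, h1, abs_mul, Real.mul_rpow (abs_nonneg _) (abs_nonneg _)]
  have main := integral_mul_le_Lp_mul_Lq_of_nonneg hpq
    (Filter.Eventually.of_forall (nn f p)) (Filter.Eventually.of_forall (nn h q)) mF mH
  simp only [prod] at main
  simp only [keyF, keyH] at main
  have n0 : ∀ (v : ℝ → ℝ) (s : ℝ), 0 ≤ ∫ x, |v x| ^ s * g' x := fun v s =>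
    integral_nonneg fun x => mul_nonneg (Real.rpow_nonneg (abs_nonneg _) _) (hg'0 x)
  refine ⟨?_, ?_⟩
  · haveI : (ENNReal.ofReal (p / r)).HolderConjugate (ENNReal.ofReal (q / r)) :=
      hpq.ennrealOfReal
    exact (mF.integrable_mul mH).congr (Filter.Eventually.of_forall prod)
  · have hri' : ∀ y, g (ginv y) = y := hri
    simp only [pleInc, pfunc, pmul, hri']
    have A := n0 (fun x => g (f x)) p
    have B := n0 (fun x => g (h x)) q
    refine (Real.rpow_le_rpow (n0 (fun x => g (f x) * g (h x)) r) main
      (by positivity : 0 ≤ 1 / r)).trans_eq ?_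
    rw [Real.mul_rpow (Real.rpow_nonneg A _) (Real.rpow_nonneg B _),
      ← Real.rpow_mul A, ← Real.rpow_mul B]
    congr 2 <;> field_simp
end
end

section
/- Let 0 < p < 1. Let f, h : ℝ → ℝ with g∘f and g∘h measurable and g(f(x)) ≥ 0, g(h(x)) ≥ 0 for almost every x, and suppose ∫_ℝ |g(f(x))|^p·g'(x) dx < ∞ and ∫_ℝ |g(h(x))|^p·g'(x) dx < ∞. Then the reverse pseudo-Minkowski inequality holds: [f]_p ⊕ [h]_p ≤_g [f ⊕ h]_p; equivalently, (∫_ℝ |g(f(x))|^p·g'(x) dx)^{1/p} + (∫_ℝ |g(h(x))|^p·g'(x) dx)^{1/p} ≤ (∫_ℝ |g(f(x)) + g(h(x))|^p·g'(x) dx)^{1/p}. -/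
open MeasureTheory

noncomputable section

lemma key_pt (p : ℝ) (hp0 : 0 < p) (hp1 : p < 1) (a b u v : ℝ) (ha : 0 < a) (hb : 0 < b)
    (hu : 0 ≤ u) (hv : 0 ≤ v) :
    (a + b) ^ p * (a / (a + b) / a ^ p * u ^ p + b / (a + b) / b ^ p * v ^ p) ≤ (u + v) ^ p := by
  have hxa : u / a ∈ Set.Ici (0 : ℝ) := Set.mem_Ici.2 (by positivity)
  have hxb : v / b ∈ Set.Ici (0 : ℝ) := Set.mem_Ici.2 (by positivity)
  have h1 : 0 ≤ a / (a + b) := by positivity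
  have h2 : 0 ≤ b / (a + b) := by positivity
  have h3 : a / (a + b) + b / (a + b) = 1 := by field_simp
  have hc := (Real.concaveOn_rpow hp0.le hp1.le).2 hxa hxb h1 h2 h3
  simp only [smul_eq_mul] at hc
  have e : a / (a + b) * (u / a) + b / (a + b) * (v / b) = (u + v) / (a + b) := by
    field_simp
  rw [e, Real.div_rpow hu ha.le, Real.div_rpow hv hb.le,
    Real.div_rpow (by positivity) (by positivity)] at hc
  have hpos : 0 < (a + b) ^ p := by positivity
  rw [le_div_iff₀ hpos] at hc
  calc _ = _ := by ring
    _ ≤ _ := hc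

lemma key_int (p : ℝ) (hp0 : 0 < p) (hp1 : p < 1) (u v w : ℝ → ℝ)
    (hu : Measurable u) (hv : Measurable v) (hw : Measurable w) (hw0 : ∀ x, 0 ≤ w x)
    (hu0 : ∀ᵐ x ∂(volume : Measure ℝ), 0 ≤ u x)
    (hv0 : ∀ᵐ x ∂(volume : Measure ℝ), 0 ≤ v x)
    (hui : Integrable (fun x => |u x| ^ p * w x))
    (hvi : Integrable (fun x => |v x| ^ p * w x)) :
    (∫ x, |u x| ^ p * w x) ^ (1 / p) + (∫ x, |v x| ^ p * w x) ^ (1 / p)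
      ≤ (∫ x, |u x + v x| ^ p * w x) ^ (1 / p) := by
  have hsi : Integrable (fun x => |u x + v x| ^ p * w x) := by
    refine (hui.add hvi).mono' ?_ ?_
    · have : Measurable (fun x => |u x + v x| ^ p * w x) :=
        ((continuous_abs.measurable.comp (hu.add hv)).pow_const p).mul hw
      exact this.aestronglyMeasurable
    · filter_upwards with x
      have h0 := hw0 x
      rw [Real.norm_of_nonneg (by positivity)]
      simp only [Pi.add_apply]
      rw [← add_mul]
      refine mul_le_mul_of_nonneg_right ?_ h0
      exact (Real.rpow_le_rpow (abs_nonneg _) (abs_add_le _ _) hp0.le).trans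
        (Real.rpow_add_le_add_rpow (abs_nonneg _) (abs_nonneg _) hp0.le hp1.le)
  have hA0 : 0 ≤ ∫ x, |u x| ^ p * w x :=
    integral_nonneg fun x => mul_nonneg (by positivity) (hw0 x)
  have hB0 : 0 ≤ ∫ x, |v x| ^ p * w x :=
    integral_nonneg fun x => mul_nonneg (by positivity) (hw0 x)
  have lin : ∀ c d : ℝ, (∀ s t : ℝ, 0 ≤ s → 0 ≤ t → c * s ^ p + d * t ^ p ≤ (s + t) ^ p) →
      c * (∫ x, |u x| ^ p * w x) + d * (∫ x, |v x| ^ p * w x)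
        ≤ ∫ x, |u x + v x| ^ p * w x := by
    intro c d hcd
    rw [← integral_const_mul, ← integral_const_mul,
      ← integral_add (hui.const_mul c) (hvi.const_mul d)]
    refine integral_mono_ae ((hui.const_mul c).add (hvi.const_mul d)) hsi ?_
    filter_upwards [hu0, hv0] with x h1 h2
    have := mul_le_mul_of_nonneg_right (hcd _ _ h1 h2) (hw0 x)
    simp only [abs_of_nonneg h1, abs_of_nonneg h2, abs_of_nonneg (add_nonneg h1 h2)]
    linarith
  generalize (∫ x, |u x| ^ p * w x) = A at *
  generalize (∫ x, |v x| ^ p * w x) = B at *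
  generalize (∫ x, |u x + v x| ^ p * w x) = S at *
  have hip : 0 < 1 / p := by positivity
  rcases hA0.eq_or_lt with rfl | hA
  · rw [Real.zero_rpow hip.ne', zero_add]
    refine Real.rpow_le_rpow hB0 ?_ hip.le
    have := lin 0 1 fun s t hs ht => by
      simpa using Real.rpow_le_rpow ht (by linarith : t ≤ s + t) hp0.le
    linarith
  rcases hB0.eq_or_lt with rfl | hB
  · rw [Real.zero_rpow hip.ne', add_zero]
    refine Real.rpow_le_rpow hA0 ?_ hip.le
    have := lin 1 0 fun s t hs ht => by
      simpa using Real.rpow_le_rpow hs (by linarith : s ≤ s + t) hp0.le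
    linarith
  have ea : (A ^ (1 / p)) ^ p = A := by
    rw [← Real.rpow_mul hA0, one_div_mul_cancel hp0.ne', Real.rpow_one]
  have eb : (B ^ (1 / p)) ^ p = B := by
    rw [← Real.rpow_mul hB0, one_div_mul_cancel hp0.ne', Real.rpow_one]
  have ha : 0 < A ^ (1 / p) := by positivity
  have hb : 0 < B ^ (1 / p) := by positivity
  generalize A ^ (1 / p) = a at *
  generalize B ^ (1 / p) = b at *
  have hab : 0 < a + b := by positivity
  have hl := lin ((a + b) ^ p * (a / (a + b) / a ^ p)) ((a + b) ^ p * (b / (a + b) / b ^ p))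
    fun s t hs ht => by
      have := key_pt p hp0 hp1 a b s t ha hb hs ht
      linarith
  rw [ea, eb] at hl
  have e2 : (a + b) ^ p * (a / (a + b) / A) * A + (a + b) ^ p * (b / (a + b) / B) * B
      = (a + b) ^ p := by
    field_simp
  rw [e2] at hl
  have h3 := Real.rpow_le_rpow (by positivity) hl hip.le
  rwa [← Real.rpow_mul hab.le, mul_one_div_cancel hp0.ne', Real.rpow_one] at h3

/-- Reverse pseudo-Minkowski inequality for an increasing generator, `0 < p < 1`:
`[f]_p ⊕ [h]_p ≤_g [f ⊕ h]_p`. -/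
theorem pseudo_minkowski_reverse (g ginv g' : ℝ → ℝ)
    (hmono : StrictMono g) (hderiv : ∀ x, HasDerivAt g (g' x) x)
    (hli : Function.LeftInverse ginv g) (hri : Function.RightInverse ginv g)
    (p : ℝ) (hp0 : 0 < p) (hp1 : p < 1)
    (f h : ℝ → ℝ) (hf : Measurable (g ∘ f)) (hh : Measurable (g ∘ h))
    (hfpos : ∀ᵐ x ∂(volume : Measure ℝ), 0 ≤ g (f x))
    (hhpos : ∀ᵐ x ∂(volume : Measure ℝ), 0 ≤ g (h x))
    (hfi : Integrable (fun x => |g (f x)| ^ p * g' x))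
    (hhi : Integrable (fun x => |g (h x)| ^ p * g' x)) :
    pleInc g (padd g ginv (pfunc g ginv g' f p) (pfunc g ginv g' h p))
      (pfunc g ginv g' (fun x => padd g ginv (f x) (h x)) p) := by
  have hg' : g' = deriv g := funext fun x => (hderiv x).deriv.symm
  have hw : Measurable g' := hg' ▸ measurable_deriv g
  have hw0 : ∀ x, 0 ≤ g' x := fun x => by
    rw [hg']; exact hmono.monotone.deriv_nonneg
  have hr : ∀ y, g (ginv y) = y := hri
  simp only [pleInc, padd, pfunc, hr]
  exact key_int p hp0 hp1 (g ∘ f) (g ∘ h) g' hf hh hw hw0 hfpos hhpos hfi hhi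
end
end

section
/- Let u, v ∈ ℝ satisfy g(u) > 0, g(v) > 0 and u ≠ v. Then the pseudo geometric–logarithmic–arithmetic mean inequalities hold: (u ⊗ v)^(1/2) ≤_g (1/(g(Ln u) − g(Ln v))) ⊙ (u ⊖ v) ≤_g (1/2) ⊙ (u ⊕ v); equivalently, √(g(u)·g(v)) ≤ (g(u) − g(v))/(ln g(u) − ln g(v)) ≤ (g(u) + g(v))/2. -/
noncomputable section

/-- pseudo-subtraction: `x ⊖ y = g⁻¹(g x - g y)` -/
def psub (g ginv : ℝ → ℝ) (x y : ℝ) : ℝ := ginv (g x - g y)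

/-- pseudo-scalar multiplication: `l ⊙ x = g⁻¹(l * g x)` -/
def psmul (g ginv : ℝ → ℝ) (l x : ℝ) : ℝ := ginv (l * g x)

/-- pseudo-logarithm: `Ln x = g⁻¹(ln (g x))` -/
def pln (g ginv : ℝ → ℝ) (x : ℝ) : ℝ := ginv (Real.log (g x))

theorem aux_GLA (a b : ℝ) (hb : 0 < b) (hab : b < a) :
    (a * b) ^ (1 / 2 : ℝ) ≤ 1 / (Real.log a - Real.log b) * (a - b) ∧
      1 / (Real.log a - Real.log b) * (a - b) ≤ 1 / 2 * (a + b) := by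
  have ha : 0 < a := hb.trans hab
  have hl : 0 < Real.log a - Real.log b := sub_pos.2 (Real.log_lt_log hb hab)
  rw [one_div_mul_eq_div]
  constructor
  · rw [le_div_iff₀ hl, Real.rpow_def_of_pos (mul_pos ha hb), Real.log_mul ha.ne' hb.ne']
    have hs : (Real.log a - Real.log b) / 2 ≤ Real.sinh ((Real.log a - Real.log b) / 2) :=
      Real.self_le_sinh_iff.2 (by linarith)
    rw [Real.sinh_eq] at hs
    have h1 := mul_le_mul_of_nonneg_left hs
      (Real.exp_pos ((Real.log a + Real.log b) * (1 / 2))).le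
    have h2 : Real.exp ((Real.log a + Real.log b) * (1 / 2)) *
        Real.exp ((Real.log a - Real.log b) / 2) = a := by
      rw [← Real.exp_add]
      conv_rhs => rw [← Real.exp_log ha]
      congr 1; ring
    have h3 : Real.exp ((Real.log a + Real.log b) * (1 / 2)) *
        Real.exp (-((Real.log a - Real.log b) / 2)) = b := by
      rw [← Real.exp_add]
      conv_rhs => rw [← Real.exp_log hb]
      congr 1; ring
    linarith
  · rw [div_le_iff₀ hl]
    have h := Real.le_log_one_add_of_nonneg (x := a / b - 1)
      (by rw [sub_nonneg, le_div_iff₀ hb]; linarith)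
    have e1 : 1 + (a / b - 1) = a / b := by ring
    have e2 : 2 * (a / b - 1) / (a / b - 1 + 2) = 2 * (a - b) / (a + b) := by
      have : a / b - 1 + 2 = (a + b) / b := by field_simp; ring
      rw [this]
      have : a + b ≠ 0 := by positivity
      field_simp
    rw [e1, e2, Real.log_div ha.ne' hb.ne', div_le_iff₀ (by positivity)] at h
    linarith

/-- Pseudo geometric–logarithmic–arithmetic mean inequalities:
`(u ⊗ v)^(1/2) ≤_g (1/(g(Ln u) - g(Ln v))) ⊙ (u ⊖ v) ≤_g (1/2) ⊙ (u ⊕ v)`. -/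
theorem pseudo_GLA_mean (g ginv : ℝ → ℝ)
    (hmono : StrictMono g) (hcont : Continuous g)
    (hli : Function.LeftInverse ginv g) (hri : Function.RightInverse ginv g)
    (u v : ℝ) (hu : 0 < g u) (hv : 0 < g v) (huv : u ≠ v) :
    pleInc g (ppow g ginv (pmul g ginv u v) (1 / 2))
      (psmul g ginv (1 / (g (pln g ginv u) - g (pln g ginv v))) (psub g ginv u v)) ∧
      pleInc g
        (psmul g ginv (1 / (g (pln g ginv u) - g (pln g ginv v))) (psub g ginv u v))
        (psmul g ginv (1 / 2) (padd g ginv u v)) := by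
  unfold pleInc ppow psmul pmul psub padd pln
  have hr : ∀ x, g (ginv x) = x := hri
  simp only [hr]
  rcases lt_or_gt_of_ne huv with h | h
  · have := aux_GLA (g v) (g u) hu (hmono h)
    have e : 1 / (Real.log (g u) - Real.log (g v)) * (g u - g v) =
        1 / (Real.log (g v) - Real.log (g u)) * (g v - g u) := by
      rw [← neg_sub (Real.log (g v)), ← neg_sub (g v), one_div_neg_eq_neg_one_div, neg_mul_neg]
    rw [e, mul_comm (g u) (g v), add_comm (g u) (g v)]
    exact this
  · exact aux_GLA (g u) (g v) hv (hmono h)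
end
end

section
/- Let a < b, let f : [a,b] → ℝ be pseudo-convex on [a,b] with g∘f integrable on [a,b], and let 0 ≤ λ ≤ 1. Define ℓ(λ) := λ ⊙ f((λb + (2−λ)a)/2) ⊕ (1−λ) ⊙ f(((1+λ)b + (1−λ)a)/2). Then f((a+b)/2) ≤_g ℓ(λ) ≤_g (1/(b−a)) ⊙ ∫^⊕_{[a,b]} f(x) ⊗ dx; equivalently, g(f((a+b)/2)) ≤ λ·g(f((λb+(2−λ)a)/2)) + (1−λ)·g(f(((1+λ)b+(1−λ)a)/2)) ≤ (1/(b−a))·∫_a^b g(f(x)) dx. -/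
open MeasureTheory intervalIntegral

noncomputable section

/-- pseudo-integral: `∫^⊕_{[a,b]} f(x) ⊗ dx = g⁻¹(∫_a^b g (f x) dx)` -/
def pint (g ginv : ℝ → ℝ) (f : ℝ → ℝ) (a b : ℝ) : ℝ :=
  ginv (∫ x in a..b, g (f x))

/-- pseudo-convexity of `f` on `[a,b]` -/
def PseudoConvexOn (g ginv : ℝ → ℝ) (a b : ℝ) (f : ℝ → ℝ) : Prop :=
  ∀ x ∈ Set.Icc a b, ∀ y ∈ Set.Icc a b, ∀ l ∈ Set.Icc (0 : ℝ) 1,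
    pleInc g (f (l * x + (1 - l) * y))
      (padd g ginv (psmul g ginv l (f x)) (psmul g ginv (1 - l) (f y)))

theorem hh_mid (h : ℝ → ℝ) (c d : ℝ) (hcd : c ≤ d)
    (hc : ∀ x ∈ Set.Icc c d, ∀ y ∈ Set.Icc c d, ∀ l ∈ Set.Icc (0 : ℝ) 1,
      h (l * x + (1 - l) * y) ≤ l * h x + (1 - l) * h y)
    (hint : IntervalIntegrable h volume c d) :
    (d - c) * h ((c + d) / 2) ≤ ∫ x in c..d, h x := by
  have e : ∫ x in c..d, h (c + d - x) = ∫ x in c..d, h x := by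
    rw [intervalIntegral.integral_comp_sub_left]
    congr 1 <;> ring
  have hi2 : IntervalIntegrable (fun x => h (c + d - x)) volume c d := by
    have := (hint.comp_sub_left (c + d)).symm
    simpa using this
  have key : ∫ x in c..d, (2 * h ((c + d) / 2)) ≤ ∫ x in c..d, (h x + h (c + d - x)) := by
    apply intervalIntegral.integral_mono_on hcd (by simp) (hint.add hi2)
    intro x hx
    have := hc x hx (c + d - x) ⟨by linarith [hx.2], by linarith [hx.1]⟩ (1 / 2)
      ⟨by norm_num, by norm_num⟩
    have e2 : (1 / 2 : ℝ) * x + (1 - 1 / 2) * (c + d - x) = (c + d) / 2 := by ring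
    rw [e2] at this
    linarith
  rw [intervalIntegral.integral_add hint hi2, e] at key
  simp only [intervalIntegral.integral_const, smul_eq_mul] at key
  linarith

/-- Refined pseudo Hermite–Hadamard inequality, lower part:
`f((a+b)/2) ≤_g ℓ(λ) ≤_g (1/(b-a)) ⊙ ∫^⊕_{[a,b]} f` where
`ℓ(λ) = λ ⊙ f((λb+(2-λ)a)/2) ⊕ (1-λ) ⊙ f(((1+λ)b+(1-λ)a)/2)`. -/
theorem pseudo_hermite_hadamard_refined_lower (g ginv : ℝ → ℝ)
    (hmono : StrictMono g) (hcont : Continuous g)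
    (hli : Function.LeftInverse ginv g) (hri : Function.RightInverse ginv g)
    (a b : ℝ) (hab : a < b) (f : ℝ → ℝ)
    (hconv : PseudoConvexOn g ginv a b f)
    (hint : IntervalIntegrable (fun x => g (f x)) volume a b)
    (l : ℝ) (hl0 : 0 ≤ l) (hl1 : l ≤ 1) :
    pleInc g (f ((a + b) / 2))
      (padd g ginv (psmul g ginv l (f ((l * b + (2 - l) * a) / 2)))
        (psmul g ginv (1 - l) (f (((1 + l) * b + (1 - l) * a) / 2)))) ∧
      pleInc g
        (padd g ginv (psmul g ginv l (f ((l * b + (2 - l) * a) / 2)))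
          (psmul g ginv (1 - l) (f (((1 + l) * b + (1 - l) * a) / 2))))
        (psmul g ginv (1 / (b - a)) (pint g ginv f a b)) := by
  have hr : ∀ x, g (ginv x) = x := hri
  have hc : ∀ x ∈ Set.Icc a b, ∀ y ∈ Set.Icc a b, ∀ l ∈ Set.Icc (0 : ℝ) 1,
      g (f (l * x + (1 - l) * y)) ≤ l * g (f x) + (1 - l) * g (f y) := by
    intro x hx y hy t ht
    have := hconv x hx y hy t ht
    simpa only [pleInc, padd, psmul, hr] using this
  simp only [pleInc, padd, psmul, pint, hr]
  have hba : 0 < b - a := sub_pos.2 hab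
  have h1 : 0 ≤ l * (b - a) := mul_nonneg hl0 hba.le
  have h2 : 0 ≤ (1 - l) * (b - a) := mul_nonneg (sub_nonneg.2 hl1) hba.le
  constructor
  · have := hc ((l * b + (2 - l) * a) / 2) ⟨by linarith, by linarith⟩
      (((1 + l) * b + (1 - l) * a) / 2) ⟨by linarith, by linarith⟩ l ⟨hl0, hl1⟩
    have e : l * ((l * b + (2 - l) * a) / 2) + (1 - l) * (((1 + l) * b + (1 - l) * a) / 2)
        = (a + b) / 2 := by ring
    rwa [e] at this
  · obtain ⟨m, hm⟩ : ∃ m, m = a + l * (b - a) := ⟨_, rfl⟩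
    have ham : a ≤ m := by linarith
    have hmb : m ≤ b := by linarith
    have i1 : IntervalIntegrable (fun x => g (f x)) volume a m :=
      hint.mono_set (by
        rw [Set.uIcc_of_le ham, Set.uIcc_of_le hab.le]; exact Set.Icc_subset_Icc_right hmb)
    have i2 : IntervalIntegrable (fun x => g (f x)) volume m b :=
      hint.mono_set (by
        rw [Set.uIcc_of_le hmb, Set.uIcc_of_le hab.le]; exact Set.Icc_subset_Icc_left ham)
    have k1 := hh_mid (fun x => g (f x)) a m ham
      (fun x hx y hy => hc x ⟨hx.1, hx.2.trans hmb⟩ y ⟨hy.1, hy.2.trans hmb⟩) i1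
    have k2 := hh_mid (fun x => g (f x)) m b hmb
      (fun x hx y hy => hc x ⟨ham.trans hx.1, hx.2⟩ y ⟨ham.trans hy.1, hy.2⟩) i2
    have e1 : (a + m) / 2 = (l * b + (2 - l) * a) / 2 := by rw [hm]; ring
    have e2 : (m + b) / 2 = ((1 + l) * b + (1 - l) * a) / 2 := by rw [hm]; ring
    have e3 : m - a = l * (b - a) := by rw [hm]; ring
    have e4 : b - m = (1 - l) * (b - a) := by rw [hm]; ring
    simp only [e1, e3] at k1
    simp only [e2, e4] at k2
    rw [← intervalIntegral.integral_add_adjacent_intervals i1 i2, one_div_mul_eq_div,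
      le_div_iff₀ hba]
    linarith
end
end

section
/- Let a < b, let f : [a,b] → ℝ be pseudo-convex on [a,b] with g∘f integrable on [a,b], and let 0 ≤ λ ≤ 1. Define L(λ) := (1/2) ⊙ (f(λb + (1−λ)a) ⊕ λ ⊙ f(a) ⊕ (1−λ) ⊙ f(b)). Then (1/(b−a)) ⊙ ∫^⊕_{[a,b]} f(x) ⊗ dx ≤_g L(λ) ≤_g (1/2) ⊙ (f(a) ⊕ f(b)); equivalently, (1/(b−a))·∫_a^b g(f(x)) dx ≤ (1/2)·(g(f(λb+(1−λ)a)) + λ·g(f(a)) + (1−λ)·g(f(b))) ≤ (g(f(a)) + g(f(b)))/2. -/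
open MeasureTheory intervalIntegral

noncomputable section

theorem hh_aux (h : ℝ → ℝ) (a b : ℝ)
    (hc : ∀ x ∈ Set.Icc a b, ∀ y ∈ Set.Icc a b, ∀ l ∈ Set.Icc (0 : ℝ) 1,
      h (l * x + (1 - l) * y) ≤ l * h x + (1 - l) * h y)
    (u v : ℝ) (hu : a ≤ u) (huv : u ≤ v) (hv : v ≤ b)
    (hint : IntervalIntegrable h volume u v) :
    ∫ x in u..v, h x ≤ (v - u) * (h u + h v) / 2 := by
  rcases huv.eq_or_lt with rfl | hlt
  · simp
  have hd : 0 < v - u := sub_pos.2 hlt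
  have hle : ∫ x in u..v, h x ≤ ∫ x in u..v, (h u + (h v - h u) / (v - u) * (x - u)) := by
    apply intervalIntegral.integral_mono_on huv hint
    · apply Continuous.intervalIntegrable
      fun_prop
    · intro x hx
      have h1 := hc v ⟨by linarith, hv⟩ u ⟨hu, by linarith⟩ ((x - u) / (v - u))
        ⟨div_nonneg (by linarith [hx.1]) hd.le, (div_le_one hd).2 (by linarith [hx.2])⟩
      have e : (x - u) / (v - u) * v + (1 - (x - u) / (v - u)) * u = x := by
        field_simp
        ring
      rw [e] at h1
      refine h1.trans (le_of_eq ?_)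
      field_simp
      ring
  refine hle.trans (le_of_eq ?_)
  rw [intervalIntegral.integral_add (by simp)
    (by apply Continuous.intervalIntegrable; fun_prop),
    intervalIntegral.integral_const_mul, intervalIntegral.integral_sub (by simp) (by simp)]
  simp only [intervalIntegral.integral_const, integral_id, smul_eq_mul]
  field_simp
  ring

/-- Refined pseudo Hermite–Hadamard inequality, upper part:
`(1/(b-a)) ⊙ ∫^⊕_{[a,b]} f ≤_g L(λ) ≤_g (1/2) ⊙ (f a ⊕ f b)` where
`L(λ) = (1/2) ⊙ (f(λb+(1-λ)a) ⊕ λ ⊙ f a ⊕ (1-λ) ⊙ f b)`. -/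
theorem pseudo_hermite_hadamard_refined_upper (g ginv : ℝ → ℝ)
    (hmono : StrictMono g) (hcont : Continuous g)
    (hli : Function.LeftInverse ginv g) (hri : Function.RightInverse ginv g)
    (a b : ℝ) (hab : a < b) (f : ℝ → ℝ)
    (hconv : PseudoConvexOn g ginv a b f)
    (hint : IntervalIntegrable (fun x => g (f x)) volume a b)
    (l : ℝ) (hl0 : 0 ≤ l) (hl1 : l ≤ 1) :
    pleInc g (psmul g ginv (1 / (b - a)) (pint g ginv f a b))
      (psmul g ginv (1 / 2)
        (padd g ginv (padd g ginv (f (l * b + (1 - l) * a)) (psmul g ginv l (f a)))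
          (psmul g ginv (1 - l) (f b)))) ∧
      pleInc g
        (psmul g ginv (1 / 2)
          (padd g ginv (padd g ginv (f (l * b + (1 - l) * a)) (psmul g ginv l (f a)))
            (psmul g ginv (1 - l) (f b))))
        (psmul g ginv (1 / 2) (padd g ginv (f a) (f b))) := by
  have hr : ∀ y, g (ginv y) = y := hri
  simp only [PseudoConvexOn, pleInc, padd, psmul, pint, hr] at hconv ⊢
  have hd : 0 < b - a := sub_pos.2 hab
  have hA : a ∈ Set.Icc a b := ⟨le_rfl, hab.le⟩
  have hB : b ∈ Set.Icc a b := ⟨hab.le, le_rfl⟩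
  have hk := hconv b hB a hA l ⟨hl0, hl1⟩
  constructor
  · obtain ⟨c, hcdef⟩ : ∃ c, c = l * b + (1 - l) * a := ⟨_, rfl⟩
    rw [← hcdef]
    have hac : a ≤ c := by nlinarith
    have hcb : c ≤ b := by nlinarith
    have i1 : IntervalIntegrable (fun x => g (f x)) volume a c :=
      hint.mono_set (by
        rw [Set.uIcc_of_le hac, Set.uIcc_of_le hab.le]
        exact Set.Icc_subset_Icc_right hcb)
    have i2 : IntervalIntegrable (fun x => g (f x)) volume c b :=
      hint.mono_set (by
        rw [Set.uIcc_of_le hcb, Set.uIcc_of_le hab.le]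
        exact Set.Icc_subset_Icc_left hac)
    have h1 := hh_aux (fun x => g (f x)) a b hconv a c le_rfl hac hcb i1
    have h2 := hh_aux (fun x => g (f x)) a b hconv c b hac hcb le_rfl i2
    have h3 := intervalIntegral.integral_add_adjacent_intervals i1 i2
    rw [← h3, one_div_mul_eq_div, div_le_iff₀ hd]
    refine (add_le_add h1 h2).trans (le_of_eq ?_)
    have e1 : c - a = l * (b - a) := by rw [hcdef]; ring
    have e2 : b - c = (1 - l) * (b - a) := by rw [hcdef]; ring
    simp only [e1, e2]
    ring
  · linarith
end
end
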